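/- arXiv:2410.01587 — 4 statements merged into one kernel-verified Lean document; each statement's English description precedes it below -/
import Mathlib

section
/- An element A ∈ SL(n,ℍ) is reversible in SL(n,ℍ) if and only if A can be written as a product A = g₁g₂ of two skew-involutions g₁, g₂ ∈ SL(n,ℍ), i.e. g₁² = g₂² = −Iₙ. -/
set_option maxHeartbeats 1000000

noncomputable section

open Matrix

/-- The embedding of `ℂ` into the real quaternions, onto the subalgebra spanned by `1` and `i`. -/
def C2H (z : ℂ) : Quaternion ℝ := ⟨z.re, z.im, 0, 0⟩

/-- For a quaternion `q = a + b i + c j + d k`, its first complex coordinate `a + b i`. -/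
def qc1 (q : Quaternion ℝ) : ℂ := ⟨q.re, q.imI⟩

/-- For a quaternion `q = a + b i + c j + d k`, its second complex coordinate `c + d i`,
so that `q = qc1 q + (qc2 q) * j`. -/
def qc2 (q : Quaternion ℝ) : ℂ := ⟨q.imJ, q.imK⟩

/-- The embedding `Φ` of quaternionic square matrices into complex matrices of doubled size:
writing `A = A₁ + A₂ · j`, `Φ A` is the block matrix `[[A₁, A₂], [-conj A₂, conj A₁]]`. -/
def Phi {m : Type*} (A : Matrix m m (Quaternion ℝ)) : Matrix (m ⊕ m) (m ⊕ m) ℂ :=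
  Matrix.fromBlocks (A.map qc1) (A.map qc2)
    (-(A.map fun q => (starRingEnd ℂ) (qc2 q))) (A.map fun q => (starRingEnd ℂ) (qc1 q))

/-- The determinant of a quaternionic matrix `A`: the determinant of `Φ A`.
`A ∈ GL(n, ℍ)` means `qdet A ≠ 0`, and `A ∈ SL(n, ℍ)` means `qdet A = 1`. -/
def qdet {m : Type*} [Fintype m] [DecidableEq m] (A : Matrix m m (Quaternion ℝ)) : ℂ :=
  (Phi A).det

/-- The `m × m` Jordan block `J(λ, m)` over `ℂ`: `λ` on the diagonal, `1` on the
superdiagonal, `0` elsewhere. -/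
def jordanC (lam : ℂ) (m : ℕ) : Matrix (Fin m) (Fin m) ℂ :=
  Matrix.of fun i j => if (j : ℕ) = (i : ℕ) then lam else if (j : ℕ) = (i : ℕ) + 1 then 1 else 0

/-- The `m × m` Jordan block `J(λ, m)`, `λ ∈ ℂ`, viewed as a quaternionic matrix. -/
def jordanH (lam : ℂ) (m : ℕ) : Matrix (Fin m) (Fin m) (Quaternion ℝ) :=
  (jordanC lam m).map C2H

/-! If `g` conjugates `A` to `A⁻¹`, that is `A * g * A = g`, it suffices to find a skew-involution
`h` with `A * h * A = h`: then `A = (A * h) * (-h)`, and skew-involutions have determinant `1`,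
since `(1 + h) ^ 2 = 2 * h` and determinants are real. By Fitting's lemma and induction on the
dimension, one may assume that every endomorphism commuting with both `A` and `g` is nilpotent or
invertible. Then `A + 1` or `-A + 1` is invertible, and a Cayley transform turns the equation into
`h * T = -T * h`, with `T` anticommuting with `g`. If `T ^ 2` is nilpotent, so is `T`, and `h` is
built on a graded Jordan basis, acting by `± i` with alternating signs. Otherwise `T` is invertible,
and dividing `g` by a square root of `± g ^ 2` in `ℝ[g ^ 2]` yields `k` with `k ^ 2 = ± 1`
anticommuting with `T`. When `k ^ 2 = 1`, one takes `h = k * I` for a complex structure `I` in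
`ℝ[T ^ 2]` if there is one; if not, `T ^ 2` is a scalar plus a nilpotent, and a complex structure on
the `1`-eigenspace of `k` is transported to the `-1`-eigenspace by `T`. -/
open scoped Quaternion

section QuaternionicDeterminant

lemma qc1_add (p q : ℍ[ℝ]) : qc1 (p + q) = qc1 p + qc1 q := by
  apply Complex.ext <;> simp [qc1]

lemma qc2_add (p q : ℍ[ℝ]) : qc2 (p + q) = qc2 p + qc2 q := by
  apply Complex.ext <;> simp [qc2]

lemma qc1_mul (p q : ℍ[ℝ]) :
    qc1 (p * q) = qc1 p * qc1 q - qc2 p * starRingEnd ℂ (qc2 q) := by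
  apply Complex.ext <;> simp [qc1, qc2] <;> ring

lemma qc2_mul (p q : ℍ[ℝ]) :
    qc2 (p * q) = qc1 p * qc2 q + qc2 p * starRingEnd ℂ (qc1 q) := by
  apply Complex.ext <;> simp [qc1, qc2] <;> ring

lemma qc1_sum {α : Type*} (s : Finset α) (f : α → ℍ[ℝ]) :
    qc1 (∑ i ∈ s, f i) = ∑ i ∈ s, qc1 (f i) :=
  map_sum (AddMonoidHom.mk' qc1 qc1_add) f s

lemma qc2_sum {α : Type*} (s : Finset α) (f : α → ℍ[ℝ]) :
    qc2 (∑ i ∈ s, f i) = ∑ i ∈ s, qc2 (f i) :=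
  map_sum (AddMonoidHom.mk' qc2 qc2_add) f s

lemma Phi_add {m : Type*} (A B : Matrix m m ℍ[ℝ]) : Phi (A + B) = Phi A + Phi B := by
  simp only [Phi, fromBlocks_add]
  congr 1 <;> ext i j <;> simp [qc1_add, qc2_add, add_comm]

lemma Phi_one {m : Type*} [DecidableEq m] : Phi (1 : Matrix m m ℍ[ℝ]) = 1 := by
  rw [Phi, ← fromBlocks_one]
  congr 1 <;> ext i j <;> by_cases h : i = j <;> apply Complex.ext <;>
    simp [qc1, qc2, one_apply, h]

variable {m : Type*} [Fintype m]

lemma Phi_mul (A B : Matrix m m ℍ[ℝ]) : Phi (A * B) = Phi A * Phi B := by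
  simp only [Phi, fromBlocks_multiply]
  congr 1 <;> ext i j <;>
    simp only [map_apply, mul_apply, Matrix.add_apply, Matrix.neg_apply, qc1_sum,
      qc2_sum, qc1_mul, qc2_mul, map_sum, map_add, map_sub, map_mul, Complex.conj_conj,
      ← Finset.sum_add_distrib, ← Finset.sum_neg_distrib] <;>
    refine Finset.sum_congr rfl fun x _ => ?_ <;> ring

variable [DecidableEq m]

/-- The embedding `Φ` bundled as a ring homomorphism, used to transport ring identities to complex
matrices. -/
def PhiRingHom : Matrix m m ℍ[ℝ] →+* Matrix (m ⊕ m) (m ⊕ m) ℂ :=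
  RingHom.mk' ⟨⟨Phi, Phi_one⟩, Phi_mul⟩ Phi_add

lemma qdet_eq_det_PhiRingHom (A : Matrix m m ℍ[ℝ]) : qdet A = (PhiRingHom A).det := rfl

lemma qdet_mul (A B : Matrix m m ℍ[ℝ]) : qdet (A * B) = qdet A * qdet B := by
  simp only [qdet, Phi_mul, det_mul]

lemma conj_qdet (A : Matrix m m ℍ[ℝ]) : starRingEnd ℂ (qdet A) = qdet A := by
  let J : Matrix (m ⊕ m) (m ⊕ m) ℂ := fromBlocks 0 1 (-1) 0
  have hJ : (fromBlocks 0 (-1) 1 0) * J = 1 := by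
    simp [J, fromBlocks_multiply]
  have hconj : J * Phi A = (starRingEnd ℂ).mapMatrix (Phi A) * J := by
    simp only [J, Phi, RingHom.mapMatrix_apply, fromBlocks_map, fromBlocks_multiply]
    congr 1 <;> ext i j <;> simp
  have hdet : (Phi A).det * J.det = starRingEnd ℂ (Phi A).det * J.det := by
    rw [mul_comm, ← det_mul, hconj, det_mul, RingHom.map_det]
  exact (mul_right_cancel₀ (right_ne_zero_of_mul_eq_one (det_mul _ J ▸ hJ ▸ det_one)) hdet).symm

lemma qdet_eq_one_of_mul_self_eq_neg_one {h : Matrix m m ℍ[ℝ]} (hh : h * h = -1) :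
    qdet h = 1 := by
  have hsq : qdet h * qdet h = 1 := by
    rw [← qdet_mul, hh, qdet_eq_det_PhiRingHom, map_neg, map_one, det_neg]
    simp
  have hadd : (1 + h) * (1 + h) = h + h := by
    rw [add_mul, mul_add, mul_add, hh]
    simp only [one_mul, mul_one]
    abel
  have hdouble : qdet (1 + h) * qdet (1 + h) = 2 ^ Fintype.card (m ⊕ m) * qdet h := by
    rw [← qdet_mul, hadd, qdet_eq_det_PhiRingHom, map_add, ← two_smul ℂ, det_smul,
      qdet_eq_det_PhiRingHom]
  obtain ⟨r, hr⟩ := Complex.conj_eq_iff_real.1 (conj_qdet h)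
  obtain ⟨s, hs⟩ := Complex.conj_eq_iff_real.1 (conj_qdet (1 + h))
  rw [hr] at hsq hdouble ⊢
  rw [hs] at hdouble
  norm_cast at hsq hdouble ⊢
  push_cast at hdouble
  have hpos : (0 : ℝ) < 2 ^ Fintype.card (m ⊕ m) := by positivity
  rcases mul_self_eq_one_iff.1 hsq with h | rfl
  · exact h
  · nlinarith [mul_self_nonneg s]

end QuaternionicDeterminant

section RealAlgebras

lemma isUnit_two_of_algebra_real {R : Type*} [Ring R] [Algebra ℝ R] : IsUnit (2 : R) := by
  simpa only [map_ofNat] using (IsUnit.mk0 (2 : ℝ) two_ne_zero).map (algebraMap ℝ R)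

lemma isSquare_of_isNilpotent_mul_self_sub {S : Type*} [CommRing S] (h2 : IsUnit (2 : S))
    {c x : S} (hc : IsUnit c) (h : IsNilpotent (x * x - c)) : IsSquare c := by
  have hx : IsUnit x := isUnit_of_mul_isUnit_left
    (by simpa using h.isUnit_add_left_of_commute hc (Commute.all _ _) : IsUnit (x * x))
  obtain ⟨y, ⟨-, hy⟩, -⟩ := Polynomial.existsUnique_nilpotent_sub_and_aeval_eq_zero
    (P := (Polynomial.X ^ 2 - Polynomial.C c : Polynomial S)) (x := x)
    (by simpa [pow_two] using h)
    (by simpa [Polynomial.derivative_X_pow, one_add_one_eq_two] using h2.mul hx)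
  refine ⟨y, ?_⟩
  simp only [map_sub, map_pow, Polynomial.aeval_X, Polynomial.aeval_C, Algebra.algebraMap_self,
    RingHom.id_apply] at hy
  linear_combination -hy

section Field

variable {F : Type*} [Field F] [Algebra ℝ F] [Algebra.IsAlgebraic ℝ F]

lemma isSquare_or_isSquare_neg_of_isAlgebraic_real (c : F) : IsSquare c ∨ IsSquare (-c) := by
  rcases Real.nonempty_algEquiv_or F with ⟨⟨e⟩⟩ | ⟨⟨e⟩⟩
  · rcases le_total 0 (e c) with h | h
    · left
      simpa using (Real.isSquare_iff.2 h).map e.symm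
    · right
      simpa using (Real.isSquare_iff.2 (neg_nonneg.2 h)).map e.symm
  · left
    simpa using IsSquare.map e.symm (IsAlgClosed.exists_eq_mul_self (e c))

lemma exists_algebraMap_eq_or_isSquare_neg_one (x : F) :
    (∃ μ : ℝ, algebraMap ℝ F μ = x) ∨ IsSquare (-1 : F) := by
  rcases Real.nonempty_algEquiv_or F with ⟨⟨e⟩⟩ | ⟨⟨e⟩⟩
  · exact .inl ⟨e x, by simpa using (e.symm.commutes (e x)).symm⟩
  · right
    simpa using IsSquare.map e.symm ⟨Complex.I, Complex.I_mul_I.symm⟩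

end Field

section Local

variable {S : Type*} [CommRing S] [IsLocalRing S]

lemma isSquare_of_isSquare_residue [Ring.KrullDimLE 0 S] (h2 : IsUnit (2 : S)) {c : S}
    (hc : IsUnit c) (h : IsSquare (IsLocalRing.residue S c)) : IsSquare c := by
  obtain ⟨y, hy⟩ := h
  obtain ⟨x, rfl⟩ := IsLocalRing.residue_surjective y
  refine isSquare_of_isNilpotent_mul_self_sub h2 hc (x := x) ?_
  rw [Ring.KrullDimLE.isNilpotent_iff_mem_maximalIdeal, ← IsLocalRing.residue_eq_zero_iff,
    map_sub, map_mul, hy, sub_self]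

variable [Algebra ℝ S] [Module.Finite ℝ S]

lemma isSquare_or_isSquare_neg_of_isUnit {c : S} (hc : IsUnit c) : IsSquare c ∨ IsSquare (-c) := by
  have := IsArtinianRing.of_finite ℝ S
  have h2 : IsUnit (2 : S) := isUnit_two_of_algebra_real
  refine (isSquare_or_isSquare_neg_of_isAlgebraic_real (IsLocalRing.residue S c)).imp
    (isSquare_of_isSquare_residue h2 hc) fun h => isSquare_of_isSquare_residue h2 hc.neg ?_
  rwa [map_neg]

lemma exists_isNilpotent_sub_algebraMap_or_isSquare_neg_one (x : S) :
    (∃ μ : ℝ, IsNilpotent (x - algebraMap ℝ S μ)) ∨ IsSquare (-1 : S) := by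
  have := IsArtinianRing.of_finite ℝ S
  refine (exists_algebraMap_eq_or_isSquare_neg_one (IsLocalRing.residue S x)).imp ?_ fun h => ?_
  · rintro ⟨μ, hμ⟩
    refine ⟨μ, ?_⟩
    rw [Ring.KrullDimLE.isNilpotent_iff_mem_maximalIdeal, ← IsLocalRing.residue_eq_zero_iff,
      map_sub, ← hμ, sub_eq_zero]
    rfl
  · exact isSquare_of_isSquare_residue isUnit_two_of_algebra_real isUnit_one.neg
      (by rwa [map_neg, map_one])

end Local

section Adjoin

lemma isUnit_of_isUnit_coe {k R : Type*} [Field k] [Ring R] [Algebra k R]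
    [Algebra.IsIntegral k R] {B : Subalgebra k R} {b : B} (hb : IsUnit (b : R)) : IsUnit b :=
  have : Algebra.IsIntegral k B := .of_injective B.val Subtype.val_injective
  IsArtinianRing.isUnit_of_nonZeroDivisor_of_isIntegral' (R := k)
    (comap_nonZeroDivisors_le_of_injective (f := B.subtype) Subtype.val_injective
      hb.mem_nonZeroDivisors)

lemma isLocalRing_of_forall_isNilpotent_or_isUnit {k R : Type*} [Field k] [Ring R] [Algebra k R]
    [Algebra.IsIntegral k R] [Nontrivial R] {B : Subalgebra k R}
    (hB : ∀ b ∈ B, IsNilpotent b ∨ IsUnit b) : IsLocalRing B :=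
  .of_isUnit_or_isUnit_one_sub_self fun b =>
    (hB b b.2).symm.imp isUnit_of_isUnit_coe fun hb => isUnit_of_isUnit_coe hb.isUnit_one_sub

variable {R : Type*} [Ring R] [Algebra ℝ R] [Module.Finite ℝ R] {x : R}

open scoped IsMulCommutative

lemma exists_mem_adjoin_mul_self_eq_or_eq_neg [IsLocalRing (Algebra.adjoin ℝ {x})]
    (hx : IsUnit x) : ∃ d ∈ Algebra.adjoin ℝ {x}, d * d = x ∨ d * d = -x := by
  rcases isSquare_or_isSquare_neg_of_isUnit (isUnit_of_isUnit_coe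
    (b := ⟨x, Algebra.self_mem_adjoin_singleton ℝ x⟩) hx) with ⟨d, hd⟩ | ⟨d, hd⟩
  · exact ⟨d, d.2, .inl (congrArg Subtype.val hd).symm⟩
  · exact ⟨d, d.2, .inr (congrArg Subtype.val hd).symm⟩

lemma exists_isNilpotent_sub_or_exists_mem_adjoin_mul_self_eq_neg_one
    [IsLocalRing (Algebra.adjoin ℝ {x})] :
    (∃ μ : ℝ, IsNilpotent (x - algebraMap ℝ R μ)) ∨
      ∃ d ∈ Algebra.adjoin ℝ {x}, d * d = -1 := by
  rcases exists_isNilpotent_sub_algebraMap_or_isSquare_neg_one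
    (⟨x, Algebra.self_mem_adjoin_singleton ℝ x⟩ : Algebra.adjoin ℝ {x}) with ⟨μ, hμ⟩ | ⟨d, hd⟩
  · exact .inl ⟨μ, hμ.map (Algebra.adjoin ℝ {x}).subtype⟩
  · exact .inr ⟨d, d.2, (congrArg Subtype.val hd).symm⟩

end Adjoin

end RealAlgebras

section NilpotentEndomorphisms

open Module

variable {K V : Type*} [DivisionRing K] [AddCommGroup V] [Module K V]

lemma eq_zero_of_forall_dual_pow_sum_eq_zero {T : End K V} {n : ℕ} (hT : T ^ (n + 1) = 0) {v : V}
    {f : V →ₗ[K] K} (hf : f ((T ^ n) v) ≠ 0) {a : Fin (n + 1) → K}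
    (ha : ∀ j : Fin (n + 1), f ((T ^ (j : ℕ)) (∑ k, a k • (T ^ (k : ℕ)) v)) = 0) : a = 0 := by
  suffices ∀ (k : ℕ) (hk : k < n + 1), a ⟨k, hk⟩ = 0 from funext fun k => this k k.2
  intro k
  induction k using Nat.strong_induction_on with
  | _ k ih =>
    intro hk
    have hsum := ha ⟨n - k, by lia⟩
    simp only [map_sum, map_smul, ← End.mul_apply, ← pow_add] at hsum
    rw [Finset.sum_eq_single ⟨k, hk⟩ _ (by simp), Nat.sub_add_cancel (Nat.lt_succ_iff.1 hk)] at hsum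
    · exact (mul_eq_zero.1 hsum).resolve_right hf
    · intro l _ hl
      rcases lt_or_gt_of_ne (Fin.val_ne_of_ne hl) with hlk | hkl
      · rw [ih l hlk l.2, zero_smul]
      · rw [pow_eq_zero_of_le (by lia) hT, LinearMap.zero_apply, map_zero, smul_zero]

lemma exists_dual_apply_ne_zero {v : V} (hv : v ≠ 0) : ∃ f : V →ₗ[K] K, f v ≠ 0 := by
  obtain ⟨f, hf, -⟩ := Submodule.exists_le_ker_of_notMem (p := (⊥ : Submodule K V)) (v := v)
    (by simpa using hv)
  exact ⟨f, hf⟩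

lemma exists_isCompl_span_range_pow [Module.Finite K V] [Nontrivial V] {T : End K V}
    (hT : IsNilpotent T) :
    ∃ (n : ℕ) (v : V) (U : Submodule K V), T ^ (n + 1) = 0 ∧
      LinearIndependent K (fun k : Fin (n + 1) => (T ^ (k : ℕ)) v) ∧ (∀ x ∈ U, T x ∈ U) ∧
      IsCompl (Submodule.span K (Set.range fun k : Fin (n + 1) => (T ^ (k : ℕ)) v)) U := by
  obtain ⟨n, hn⟩ := Nat.exists_eq_succ_of_ne_zero (pos_nilpotencyClass_iff.2 hT).ne'
  have hTn : T ^ (n + 1) = 0 := by rw [← Nat.succ_eq_add_one, ← hn, pow_nilpotencyClass hT]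
  obtain ⟨v, hv⟩ : ∃ v, (T ^ n) v ≠ 0 := by
    by_contra! h
    exact pow_pred_nilpotencyClass hT (by rw [hn]; exact LinearMap.ext h)
  obtain ⟨f, hf⟩ := exists_dual_apply_ne_zero (K := K) hv
  let F : V →ₗ[K] (Fin (n + 1) → K) := LinearMap.pi fun j => f ∘ₗ (T ^ (j : ℕ))
  have hF {a : Fin (n + 1) → K} (ha : F (∑ k, a k • (T ^ (k : ℕ)) v) = 0) : a = 0 :=
    eq_zero_of_forall_dual_pow_sum_eq_zero hTn hf (congrFun ha)
  have hli : LinearIndependent K (fun k : Fin (n + 1) => (T ^ (k : ℕ)) v) :=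
    Fintype.linearIndependent_iff.2 fun a ha => congrFun (hF (by rw [ha, map_zero]))
  refine ⟨n, v, LinearMap.ker F, hTn, hli, ?_, (Submodule.isCompl_iff_disjoint _ _ ?_).2 ?_⟩
  · intro x hx
    ext j
    change f ((T ^ (j : ℕ)) (T x)) = 0
    rw [← End.mul_apply, ← pow_succ]
    rcases lt_or_ge ((j : ℕ) + 1) (n + 1) with hj | hj
    · exact congrFun hx ⟨j + 1, hj⟩
    · rw [pow_eq_zero_of_le hj hTn, LinearMap.zero_apply, map_zero]
  · have hrank := LinearMap.finrank_range_add_finrank_ker F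
    have hrange := Submodule.finrank_le (LinearMap.range F)
    rw [finrank_fin_fun] at hrange
    rw [finrank_span_eq_card hli, Fintype.card_fin]
    lia
  · refine Submodule.disjoint_def.2 fun x hspan hker => ?_
    obtain ⟨a, rfl⟩ := (Submodule.mem_span_range_iff_exists_fun K).1 hspan
    simp [hF hker]

theorem exists_graded_jordan_basis [Module.Finite K V] {T : End K V} (hT : IsNilpotent T) :
    ∃ (κ : Type) (b : Basis κ K V) (deg : κ → ℕ),
      ∀ k, T (b k) = 0 ∨ ∃ k', T (b k) = b k' ∧ deg k' = deg k + 1 := by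
  induction hd : finrank K V using Nat.strong_induction_on generalizing V with
  | _ d ih =>
  rcases subsingleton_or_nontrivial V with _ | _
  · exact ⟨Empty, .empty V, Empty.elim, (·.elim)⟩
  obtain ⟨n, v, U, hTn, hli, hU, hc⟩ := exists_isCompl_span_range_pow hT
  have hfinrank : finrank K U < d := by
    have := Submodule.finrank_add_eq_of_isCompl hc
    rw [finrank_span_eq_card hli, Fintype.card_fin] at this
    lia
  have hnil : IsNilpotent (T.restrict hU) := End.isNilpotent.restrict hU hT
  obtain ⟨κ, b, deg, hb⟩ := ih _ hfinrank hnil rfl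
  let B := ((Basis.span hli).prod b).map (Submodule.prodEquivOfIsCompl _ U hc)
  have hBl (k : Fin (n + 1)) : B (.inl k) = (T ^ (k : ℕ)) v := by
    simp [B, Basis.span_apply]
  have hBr (k : κ) : B (.inr k) = b k := by simp [B]
  refine ⟨Fin (n + 1) ⊕ κ, B, Sum.elim (↑) deg, ?_⟩
  rintro (k | k)
  · rw [hBl, ← End.mul_apply, ← pow_succ']
    rcases lt_or_ge ((k : ℕ) + 1) (n + 1) with hk | hk
    · exact .inr ⟨.inl ⟨k + 1, hk⟩, (hBl ⟨k + 1, hk⟩).symm, rfl⟩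
    · exact .inl (by rw [pow_eq_zero_of_le hk hTn, LinearMap.zero_apply])
  · have hTb : T (B (.inr k)) = T.restrict hU (b k) := by rw [hBr]; rfl
    rw [hTb]
    rcases hb k with h | ⟨k', h, hdeg⟩
    · exact .inl (by rw [h, Submodule.coe_zero])
    · exact .inr ⟨.inr k', by rw [h, hBr], hdeg⟩

variable {ι : K}

lemma exists_mul_self_eq_neg_one_and_mul_eq_smul [Module.Finite K V] (hι : ι * ι = -1) {T : End K V}
    (hT : IsNilpotent T) (ε : ℤˣ) : ∃ h : End K V, h * h = -1 ∧ h * T = ε • (T * h) := by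
  obtain ⟨κ, b, deg, hb⟩ := exists_graded_jordan_basis hT
  let h : End K V := b.constr ℕ fun k => ε ^ deg k • ι • b k
  have hh (k : κ) : h (b k) = ε ^ deg k • ι • b k := b.constr_basis ℕ _ k
  refine ⟨h, b.ext fun k => ?_, b.ext fun k => ?_⟩
  · simp only [End.mul_apply, hh, Units.smul_def, map_zsmul, map_smul, smul_comm ι, smul_smul, hι]
    simp [← mul_pow]
  · rcases hb k with h0 | ⟨k', hk', hdeg⟩
    · simp [hh, h0, Units.smul_def]
    · simp only [End.mul_apply, LinearMap.smul_apply, hh, hk', hdeg, Units.smul_def, map_zsmul,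
        map_smul, pow_succ', mul_smul]

lemma exists_corner_mul_self_eq_neg [Module.Finite K V] (hι : ι * ι = -1) {P N : End K V}
    (hP : IsIdempotentElem P) (hPN : Commute P N) (hN : IsNilpotent N) :
    ∃ X : End K V, X * X = -P ∧ P * X = X ∧ X * P = X ∧ Commute X N := by
  have hinv : ∀ x ∈ LinearMap.range P, N x ∈ LinearMap.range P := by
    rintro _ ⟨x, rfl⟩
    exact ⟨N x, LinearMap.congr_fun hPN x⟩
  obtain ⟨J, hJ, hJN⟩ :=
    exists_mul_self_eq_neg_one_and_mul_eq_smul hι (End.isNilpotent.restrict hinv hN) 1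
  have hPr (x : LinearMap.range P) : P.rangeRestrict x = x := by
    obtain ⟨_, y, rfl⟩ := x
    exact Subtype.ext (LinearMap.congr_fun hP y)
  refine ⟨(LinearMap.range P).subtype ∘ₗ J ∘ₗ P.rangeRestrict, ?_, ?_, ?_, ?_⟩
  · ext x
    simpa [hPr] using congrArg Subtype.val (LinearMap.congr_fun hJ (P.rangeRestrict x))
  · ext x
    exact congrArg Subtype.val (hPr (J (P.rangeRestrict x)))
  · ext x
    simp [show P.rangeRestrict (P x) = P.rangeRestrict x from hPr (P.rangeRestrict x)]
  · ext x
    have hx : P.rangeRestrict (N x) = N.restrict hinv (P.rangeRestrict x) :=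
      Subtype.ext (LinearMap.congr_fun hPN x)
    simpa [hx] using congrArg Subtype.val (LinearMap.congr_fun hJN (P.rangeRestrict x))

end NilpotentEndomorphisms

section Ring

variable {R : Type*} [Ring R]

lemma commute_mul_self_of_semiconjBy_neg {k x : R} (h : SemiconjBy k x (-x)) :
    Commute k (x * x) := by
  have := h.mul_right h
  rwa [neg_mul_neg] at this

lemma sub_one_mul_mul_sub_one_eq_iff [Invertible (2 : R)] (c : Rˣ) (h : R) :
    ((c : R) - 1) * h * (c - 1) = h ↔ SemiconjBy h (⅟2 - ↑c⁻¹) (-(⅟2 - ↑c⁻¹)) := by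
  have htwo : h * ⅟2 + ⅟2 * h = h := by
    rw [((Commute.ofNat_right h 2).invOf_right).eq, ← add_mul, invOf_two_add_invOf_two, one_mul]
  have hmul : ((c : R) - 1) * h * (c - 1) - h = c * (h - h * ↑c⁻¹ - ↑c⁻¹ * h) * c := by
    simp only [mul_sub, sub_mul, mul_assoc, Units.inv_mul, Units.mul_inv_cancel_left, mul_one,
      one_mul]
    abel
  have hsemi : h * (⅟2 - ↑c⁻¹) - -(⅟2 - ↑c⁻¹) * h = h - h * ↑c⁻¹ - ↑c⁻¹ * h := by
    calc h * (⅟2 - ↑c⁻¹) - -(⅟2 - ↑c⁻¹) * h = h * ⅟2 + ⅟2 * h - h * ↑c⁻¹ - ↑c⁻¹ * h := by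
          simp only [mul_sub, neg_mul, sub_mul]
          abel
      _ = h - h * ↑c⁻¹ - ↑c⁻¹ * h := by rw [htwo]
  rw [SemiconjBy, ← sub_eq_zero, hmul, Units.mul_left_eq_zero, Units.mul_right_eq_zero, ← hsemi,
    sub_eq_zero]

lemma isIdempotentElem_invOf_two_mul_one_add [Invertible (2 : R)] {k : R} (hk : k * k = 1) :
    IsIdempotentElem (⅟2 * (1 + k)) := by
  have hcomm : Commute (1 + k) (⅟2 : R) := (Commute.ofNat_right _ 2).invOf_right
  have hsq : (1 + k) * (1 + k) = 2 * (1 + k) := by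
    rw [add_mul, mul_add, mul_add, hk, two_mul]
    simp only [one_mul, mul_one]
    abel
  rw [IsIdempotentElem, mul_assoc, ← mul_assoc (1 + k), hcomm.eq, mul_assoc, hsq,
    invOf_mul_cancel_left']

lemma invOf_two_mul_one_add_mul [Invertible (2 : R)] {k x : R} (h : SemiconjBy k x (-x)) :
    ⅟2 * (1 + k) * x = x * (1 - ⅟2 * (1 + k)) := by
  have hcomm : Commute x (⅟2 : R) := (Commute.ofNat_right x 2).invOf_right
  have hx : x = ⅟2 * (2 * x) := (invOf_mul_cancel_left' 2 x).symm
  rw [mul_sub, mul_one, ← mul_assoc x, hcomm.eq, mul_assoc, mul_assoc, add_mul, h.eq]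
  nth_rewrite 3 [hx]
  rw [← mul_sub]
  noncomm_ring

/-- A complex structure `X` on the image of an idempotent `P` extends to the image of `1 - P` by
transporting it along `T` with the opposite sign. -/
lemma exists_semiconjBy_neg_of_corner {T : Rˣ} {P X : R} (hPT : P * T = T * (1 - P))
    (hX : X * X = -P) (hPX : P * X = X) (hXP : X * P = X) (hXT : Commute X (T * T : R)) :
    ∃ h : R, h * h = -1 ∧ SemiconjBy h (T : R) (-T) := by
  have hXTX : X * T * X = 0 :=
    calc X * T * X = X * (P * T) * X := by rw [← mul_assoc, hXP]
      _ = X * T * (X - P * X) := by rw [hPT]; noncomm_ring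
      _ = 0 := by rw [hPX, sub_self, mul_zero]
  have hconj : T * X * ↑T⁻¹ = ↑T⁻¹ * X * T := by
    rw [Units.mul_inv_eq_iff_eq_mul, mul_assoc, mul_assoc, hXT.eq]
    simp only [← mul_assoc, Units.inv_mul, one_mul]
  have hTP : T * P * ↑T⁻¹ = 1 - P := by
    rw [Units.mul_inv_eq_iff_eq_mul, sub_mul, hPT]
    noncomm_ring
  refine ⟨X - T * X * ↑T⁻¹, ?_, ?_⟩
  · have hXY : X * (T * X * ↑T⁻¹) = 0 := by rw [← mul_assoc, ← mul_assoc, hXTX, zero_mul]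
    have hYX : T * X * ↑T⁻¹ * X = 0 := by
      rw [hconj, mul_assoc, mul_assoc, ← mul_assoc X, hXTX, mul_zero]
    have hYY : T * X * ↑T⁻¹ * (T * X * ↑T⁻¹) = -(1 - P) := by
      simp only [mul_assoc, Units.inv_mul_cancel_left]
      rw [← mul_assoc X, hX, ← hTP]
      noncomm_ring
    rw [sub_mul, mul_sub, mul_sub, hX, hXY, hYX, hYY]
    abel
  · have hTT : T * (T * X * ↑T⁻¹) = X * T := by
      rw [← mul_assoc, ← mul_assoc, ← hXT.eq, ← mul_assoc, Units.mul_inv_cancel_right]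
    rw [SemiconjBy, sub_mul, Units.inv_mul_cancel_right, neg_mul, mul_sub, hTT, neg_sub]

/-- The commutant of `{a, b}` consists of units and nilpotent elements. For endomorphisms of a
finite-dimensional space this says, by Fitting's lemma, that the space is not the direct sum of two
proper subspaces invariant under `a` and `b`. -/
def CommutantIsLocal (a b : R) : Prop :=
  ∀ u, Commute u a → Commute u b → IsNilpotent u ∨ IsUnit u

lemma isNilpotent_or_isUnit_add_one {A g : Rˣ} (hAg : A * g * A = g)
    (hloc : CommutantIsLocal (A : R) g) : IsNilpotent (A + 1 : R) ∨ IsUnit (A + 1 : R) := by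
  have hinv : g * A = A⁻¹ * g := by rw [eq_inv_mul_iff_mul_eq, ← mul_assoc, hAg]
  have hinv' : g * A⁻¹ = A * g := by rw [mul_inv_eq_iff_eq_mul, hAg]
  have hsq : (A + 1 : R) ^ 2 = (A + ↑A⁻¹ + 2) * A := by
    rw [add_mul, add_mul (A : R), Units.inv_mul]
    noncomm_ring
  have hcA : Commute (A + ↑A⁻¹ + 2 : R) A :=
    (((Commute.refl _).add_left (Commute.refl _).units_inv_left)).add_left (Commute.ofNat_left 2 _)
  have hcg : Commute (A + ↑A⁻¹ + 2 : R) g := by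
    refine Commute.add_left ?_ (Commute.ofNat_left 2 _)
    rw [Commute, SemiconjBy, mul_add, add_mul]
    simp only [← Units.val_mul, hinv, hinv', add_comm]
  refine (hloc _ hcA hcg).imp (fun h => ?_) fun h => ?_
  · exact .of_pow (hsq ▸ hcA.isNilpotent_mul_right h)
  · exact (isUnit_pow_iff two_ne_zero).1 (hsq ▸ h.mul A.isUnit)

end Ring

section LocalCommutant

open Module

section Algebra

variable {R : Type*} [Ring R] [Algebra ℝ R] [Module.Finite ℝ R] [Nontrivial R] {T g : R}

lemma isLocalRing_adjoin_of_commutantIsLocal (hloc : CommutantIsLocal T g) {x : R}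
    (hxT : Commute x T) (hxg : Commute x g) : IsLocalRing (Algebra.adjoin ℝ {x}) :=
  isLocalRing_of_forall_isNilpotent_or_isUnit fun y hy => hloc y
    (Algebra.commute_of_mem_adjoin_singleton_of_commute hy hxT.symm).symm
    (Algebra.commute_of_mem_adjoin_singleton_of_commute hy hxg.symm).symm

lemma exists_semiconjBy_neg_mul_self_eq_one_or_eq_neg_one (hg : IsUnit g)
    (hgT : SemiconjBy g T (-T)) (hloc : CommutantIsLocal T g) :
    ∃ k : R, SemiconjBy k T (-T) ∧ (k * k = 1 ∨ k * k = -1) := by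
  have hggT : Commute (g * g) T := by
    have := hgT.neg_right.mul_left hgT
    rwa [neg_neg] at this
  have hggg : Commute (g * g) g := (Commute.refl g).mul_left (Commute.refl g)
  have := isLocalRing_adjoin_of_commutantIsLocal hloc hggT hggg
  obtain ⟨d, hd, hdd⟩ := exists_mem_adjoin_mul_self_eq_or_eq_neg (hg.mul hg)
  have hdT : Commute T d := Algebra.commute_of_mem_adjoin_singleton_of_commute hd hggT.symm
  have hdg : Commute g d := Algebra.commute_of_mem_adjoin_singleton_of_commute hd hggg.symm
  have hdu : IsUnit (d ^ 2) := by
    rw [pow_two]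
    rcases hdd with h | h <;> rw [h]
    exacts [hg.mul hg, (hg.mul hg).neg]
  obtain ⟨d, rfl⟩ := (isUnit_pow_iff two_ne_zero).1 hdu
  have hdinvT : SemiconjBy (↑d⁻¹) T T := hdT.symm.units_inv_left
  refine ⟨g * ↑d⁻¹, SemiconjBy.mul_left hgT hdinvT, ?_⟩
  have hsq : g * ↑d⁻¹ * (g * ↑d⁻¹) = g * g * ↑(d * d)⁻¹ := by
    rw [_root_.mul_inv_rev, Units.val_mul, mul_assoc, ← mul_assoc _ g, ← hdg.units_inv_right.eq]
    simp only [mul_assoc]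
  rw [hsq, Units.mul_inv_eq_iff_eq_mul, Units.mul_inv_eq_iff_eq_mul, one_mul, neg_one_mul,
    Units.val_mul]
  exact hdd.imp Eq.symm fun h => by rw [h, neg_neg]

end Algebra

variable {K V : Type*} [DivisionRing K] [AddCommGroup V] [Module K V] [Module.Finite K V]
  [Algebra ℝ K] [Module.Finite ℝ K] [Module ℝ V] [IsScalarTower ℝ K V] {ι : K}

lemma finite_real_end : Module.Finite ℝ (End K V) :=
  have : Module.Finite ℝ V := .trans K V
  inferInstance

lemma exists_semiconjBy_neg_of_mul_self_eq_one (hι : ι * ι = -1) {T k : End K V} (hT : IsUnit T)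
    (hk : k * k = 1) (hkT : SemiconjBy k T (-T)) [IsLocalRing (Algebra.adjoin ℝ {T * T})] :
    ∃ h : End K V, h * h = -1 ∧ SemiconjBy h T (-T) := by
  have := finite_real_end (K := K) (V := V)
  have hkTT : Commute k (T * T) := commute_mul_self_of_semiconjBy_neg hkT
  rcases exists_isNilpotent_sub_or_exists_mem_adjoin_mul_self_eq_neg_one (x := T * T) with
    ⟨μ, hμ⟩ | ⟨I, hI, hII⟩
  · obtain ⟨T, rfl⟩ := hT
    let := (isUnit_two_of_algebra_real (R := End K V)).invertible
    have hPN : Commute (⅟2 * (1 + k)) (T * T - algebraMap ℝ (End K V) μ) :=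
      ((Commute.ofNat_left 2 _).invOf_left.mul_left ((Commute.one_left _).add_left hkTT)).sub_right
        (Algebra.commutes μ _).symm
    obtain ⟨X, hX, hPX, hXP, hXN⟩ := exists_corner_mul_self_eq_neg hι
      (isIdempotentElem_invOf_two_mul_one_add hk) hPN hμ
    exact exists_semiconjBy_neg_of_corner (invOf_two_mul_one_add_mul hkT) hX hPX hXP
      (by simpa using hXN.add_right (Algebra.commutes μ X).symm)
  · have hkI : Commute k I := Algebra.commute_of_mem_adjoin_singleton_of_commute hI hkTT
    have hTI : Commute T I := Algebra.commute_of_mem_adjoin_singleton_of_commute hI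
      ((Commute.refl T).mul_right (Commute.refl T))
    refine ⟨k * I, ?_, hkT.mul_left hTI.symm⟩
    rw [mul_assoc, ← mul_assoc I, ← hkI.eq, mul_assoc, ← mul_assoc, hk, hII, one_mul]

variable [Nontrivial V]

theorem exists_semiconjBy_neg_of_commutantIsLocal (hι : ι * ι = -1) {T g : End K V}
    (hg : IsUnit g) (hgT : SemiconjBy g T (-T)) (hloc : CommutantIsLocal T g) :
    ∃ h : End K V, h * h = -1 ∧ SemiconjBy h T (-T) := by
  have hTT : Commute (T * T) T := (Commute.refl T).mul_left (Commute.refl T)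
  have hTg : Commute (T * T) g := (commute_mul_self_of_semiconjBy_neg hgT).symm
  rcases hloc _ hTT hTg with hnil | hunit
  · obtain ⟨h, hh, hhT⟩ := exists_mul_self_eq_neg_one_and_mul_eq_smul hι
      (IsNilpotent.of_pow (pow_two T ▸ hnil)) (-1)
    exact ⟨h, hh, by simpa [SemiconjBy, Units.smul_def] using hhT⟩
  · have := finite_real_end (K := K) (V := V)
    obtain ⟨k, hkT, hk | hk⟩ := exists_semiconjBy_neg_mul_self_eq_one_or_eq_neg_one hg hgT hloc
    · have := isLocalRing_adjoin_of_commutantIsLocal hloc hTT hTg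
      exact exists_semiconjBy_neg_of_mul_self_eq_one hι
        ((isUnit_pow_iff two_ne_zero).1 (pow_two T ▸ hunit)) hk hkT
    · exact ⟨k, hk, hkT⟩

-- The Cayley transform `⅟2 - (A + 1)⁻¹` turns `A * h * A = h` into anticommutation with `h`.
lemma exists_skew_reverser_of_isUnit_add_one (hι : ι * ι = -1) {A g : End K V} (hg : IsUnit g)
    (hAg : A * g * A = g) (hloc : CommutantIsLocal A g) (hA : IsUnit (A + 1)) :
    ∃ h : End K V, h * h = -1 ∧ A * h * A = h := by
  let := (isUnit_two_of_algebra_real (R := End K V)).invertible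
  obtain ⟨c, hc⟩ := hA
  obtain rfl : A = c - 1 := eq_sub_of_add_eq hc.symm
  rw [sub_one_mul_mul_sub_one_eq_iff] at hAg
  simp only [sub_one_mul_mul_sub_one_eq_iff]
  refine exists_semiconjBy_neg_of_commutantIsLocal hι hg hAg fun u huT hug => hloc u ?_ hug
  have huc : Commute u ↑c⁻¹ := by
    simpa using (Commute.ofNat_right u 2).invOf_right.sub_right huT
  exact (Commute.units_inv_right_iff.1 huc).sub_right (Commute.one_right u)

theorem exists_skew_reverser_of_commutantIsLocal (hι : ι * ι = -1) {A g : End K V} (hA : IsUnit A)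
    (hg : IsUnit g) (hAg : A * g * A = g) (hloc : CommutantIsLocal A g) :
    ∃ h : End K V, h * h = -1 ∧ A * h * A = h := by
  lift A to (End K V)ˣ using hA
  lift g to (End K V)ˣ using hg
  rcases isNilpotent_or_isUnit_add_one (Units.ext hAg) hloc with hnil | hunit
  · have hneg : IsUnit (-(A : End K V) + 1) := by
      have h2 : -(A : End K V) + 1 = 2 + -(A + 1) := by rw [← one_add_one_eq_two]; abel
      rw [h2]
      exact hnil.neg.isUnit_add_left_of_commute isUnit_two_of_algebra_real
        (Commute.ofNat_right _ 2)
    obtain ⟨h, hh, hAh⟩ := exists_skew_reverser_of_isUnit_add_one hι g.isUnit (A := -A)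
      (by simpa using hAg) (fun u hu hug => hloc u (by simpa using hu.neg_right) hug) hneg
    exact ⟨h, hh, by simpa using hAh⟩
  · exact exists_skew_reverser_of_isUnit_add_one hι g.isUnit hAg hloc hunit

end LocalCommutant

section FittingInduction

open Module

section Submodules

variable {K V : Type*} [DivisionRing K] [AddCommGroup V] [Module K V]

lemma isUnit_restrict [Module.Finite K V] {p : Submodule K V} {a : End K V} (ha : IsUnit a)
    (hp : ∀ x ∈ p, a x ∈ p) : IsUnit (a.restrict hp) := by
  rw [LinearMap.isUnit_iff_ker_eq_bot, LinearMap.ker_eq_bot'] at ha ⊢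
  exact fun x hx => Subtype.ext (ha x (congrArg Subtype.val hx))

lemma exists_isCompl_of_not_isNilpotent_of_not_isUnit [Module.Finite K V] {u : End K V}
    (hnil : ¬IsNilpotent u) (hunit : ¬IsUnit u) :
    ∃ p q : Submodule K V, IsCompl p q ∧ p ≠ ⊤ ∧ q ≠ ⊤ ∧
      ∀ a : End K V, Commute u a → (∀ x ∈ p, a x ∈ p) ∧ ∀ x ∈ q, a x ∈ q := by
  obtain ⟨n, hn, hcompl⟩ := ((Filter.eventually_ge_atTop 1).and
    (LinearMap.eventually_isCompl_ker_pow_range_pow u)).exists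
  refine ⟨_, _, hcompl, fun h => hnil ⟨n, LinearMap.ker_eq_top.1 h⟩, fun h => hunit ?_,
    fun a ha => ?_⟩
  · exact (isUnit_pow_iff (Nat.one_le_iff_ne_zero.1 hn)).1
      ((LinearMap.isUnit_iff_range_eq_top _).2 h)
  · have hcomm : ∀ x, (u ^ n) (a x) = a ((u ^ n) x) := LinearMap.congr_fun (ha.pow_left n).eq
    refine ⟨fun x hx => ?_, ?_⟩
    · rw [LinearMap.mem_ker, hcomm, LinearMap.mem_ker.1 hx, map_zero]
    · rintro _ ⟨y, rfl⟩
      exact ⟨a y, hcomm y⟩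

variable {p q : Submodule K V}

/-- The block-diagonal endomorphism with given blocks on two complementary submodules. It is a ring
homomorphism, so that identities between endomorphisms may be checked block by block. -/
def endOfIsCompl (hc : IsCompl p q) : End K p × End K q →+* End K V :=
  ((p.prodEquivOfIsCompl q hc).conjRingEquiv : End K (p × q) →+* End K V).comp
    (LinearMap.prodMapRingHom K p q)

lemma endOfIsCompl_restrict (hc : IsCompl p q) {a : End K V} (hp : ∀ x ∈ p, a x ∈ p)
    (hq : ∀ x ∈ q, a x ∈ q) : endOfIsCompl hc (a.restrict hp, a.restrict hq) = a := by
  ext x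
  obtain ⟨y, rfl⟩ := (p.prodEquivOfIsCompl q hc).surjective x
  simp [endOfIsCompl]

end Submodules

theorem exists_skew_reverser_of_isUnit {K V : Type*} [DivisionRing K] [AddCommGroup V] [Module K V]
    [Module.Finite K V] [Algebra ℝ K] [Module.Finite ℝ K] [Module ℝ V] [IsScalarTower ℝ K V]
    {ι : K} (hι : ι * ι = -1) {A g : End K V} (hA : IsUnit A) (hg : IsUnit g)
    (hAg : A * g * A = g) : ∃ h : End K V, h * h = -1 ∧ A * h * A = h := by
  induction hd : finrank K V using Nat.strong_induction_on generalizing V with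
  | _ d ih
  rcases subsingleton_or_nontrivial V with hV | hV
  · exact ⟨0, Subsingleton.elim _ _, Subsingleton.elim _ _⟩
  by_cases hloc : CommutantIsLocal A g
  · exact exists_skew_reverser_of_commutantIsLocal hι hA hg hAg hloc
  simp only [CommutantIsLocal, not_forall, not_or] at hloc
  obtain ⟨u, huA, hug, hnil, hunit⟩ := hloc
  obtain ⟨p, q, hc, hp, hq, hinv⟩ := exists_isCompl_of_not_isNilpotent_of_not_isUnit hnil hunit
  have hrestrict : ∀ W : Submodule K V, W ≠ ⊤ → ∀ hAW : ∀ x ∈ W, A x ∈ W,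
      (∀ x ∈ W, g x ∈ W) → ∃ h : End K W, h * h = -1 ∧
        A.restrict hAW * h * A.restrict hAW = h := fun W hW hAW hgW =>
    ih _ (hd ▸ Submodule.finrank_lt hW) (isUnit_restrict hA hAW) (isUnit_restrict hg hgW)
      (LinearMap.ext fun x => Subtype.ext (LinearMap.congr_fun hAg x)) rfl
  obtain ⟨hAp, hAq⟩ := hinv A huA
  obtain ⟨hgp, hgq⟩ := hinv g hug
  obtain ⟨h₁, hh₁, hAh₁⟩ := hrestrict p hp hAp hgp
  obtain ⟨h₂, hh₂, hAh₂⟩ := hrestrict q hq hAq hgq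
  refine ⟨endOfIsCompl hc (h₁, h₂), ?_, ?_⟩
  · rw [← map_mul, Prod.mk_mul_mk, hh₁, hh₂, ← Prod.neg_mk, Prod.mk_one_one, map_neg, map_one]
  · rw [← endOfIsCompl_restrict hc hAp hAq, ← map_mul, ← map_mul, Prod.mk_mul_mk, Prod.mk_mul_mk,
      hAh₁, hAh₂]

end FittingInduction

section Group

variable {G : Type*} [Group G]

lemma conj_eq_inv_iff_mul_mul_eq {a g : G} : g * a * g⁻¹ = a⁻¹ ↔ a * g * a = g := by
  rw [mul_inv_eq_iff_eq_mul, eq_inv_mul_iff_mul_eq, ← mul_assoc]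

end Group

section SkewInvolutions

variable {R : Type*} [Ring R]

lemma conj_mul_eq_inv_of_mul_self_eq_neg_one {g₁ g₂ : Rˣ} (h₁ : (g₁ : R) * g₁ = -1)
    (h₂ : (g₂ : R) * g₂ = -1) : g₁ * (g₁ * g₂) * g₁⁻¹ = (g₁ * g₂)⁻¹ := by
  have h₁' : g₁ * g₁ = -1 := Units.ext h₁
  have h₂' : g₂ * g₂ = -1 := Units.ext h₂
  rw [conj_eq_inv_iff_mul_mul_eq]
  calc g₁ * g₂ * g₁ * (g₁ * g₂) = g₁ * (g₂ * (g₁ * g₁) * g₂) := by group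
    _ = g₁ := by rw [h₁', mul_neg_one, neg_mul, h₂', neg_neg, mul_one]

lemma exists_skewInvolutions_mul_eq {A : Rˣ} {h : R} (hh : h * h = -1) (hAh : A * h * A = h) :
    ∃ g₁ g₂ : Rˣ, (g₁ : R) * g₁ = -1 ∧ (g₂ : R) * g₂ = -1 ∧ A = g₁ * g₂ := by
  have hinv : h * -h = 1 := by rw [mul_neg, hh, neg_neg]
  have hinv' : -h * h = 1 := by rw [neg_mul, hh, neg_neg]
  let k : Rˣ := ⟨h, -h, hinv, hinv'⟩
  refine ⟨A * k, k⁻¹, ?_, ?_, (mul_inv_cancel_right A k).symm⟩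
  · change (A : R) * h * (A * h) = -1
    rw [← mul_assoc, hAh, hh]
  · change -h * -h = -1
    rw [neg_mul_neg, hh]

end SkewInvolutions

section Matrices

variable {m : Type*} [Fintype m] [DecidableEq m]

theorem exists_matrix_skew_reverser {K : Type*} [DivisionRing K] [Algebra ℝ K] [Module.Finite ℝ K]
    {ι : K} (hι : ι * ι = -1) {A g : Matrix m m K} (hA : IsUnit A) (hg : IsUnit g)
    (hAg : A * g * A = g) : ∃ h : Matrix m m K, h * h = -1 ∧ A * h * A = h := by
  let L : Matrix m m K → Module.End K (m → K) := Matrix.toLinearMapRight'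
  have hmul (M N) : L (M * N) = L N * L M := Matrix.toLinearMapRight'_mul M N
  have hone : L 1 = 1 := Matrix.toLinearMapRight'_one
  have hunit {M} (hM : IsUnit M) : IsUnit (L M) := by
    obtain ⟨M, rfl⟩ := hM
    exact ⟨⟨L M, L ↑M⁻¹, by rw [← hmul, M.inv_mul, hone], by rw [← hmul, M.mul_inv, hone]⟩, rfl⟩
  obtain ⟨h, hh, hAh⟩ := exists_skew_reverser_of_isUnit hι (hunit hA) (hunit hg)
    (by rw [mul_assoc, ← hmul, ← hmul, hAg])
  obtain ⟨h, rfl⟩ := Matrix.toLinearMapRight'.surjective h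
  refine ⟨h, Matrix.toLinearMapRight'.injective ?_, Matrix.toLinearMapRight'.injective ?_⟩
  · exact (hmul h h).trans (by rw [map_neg]; exact hh.trans (congrArg Neg.neg hone.symm))
  · exact (hmul _ _).trans (by rw [hmul, ← mul_assoc]; exact hAh)

lemma quaternion_i_mul_self : (⟨0, 1, 0, 0⟩ : ℍ[ℝ]) * ⟨0, 1, 0, 0⟩ = -1 := by
  ext <;> simp

theorem reversible_SLH_iff_product_of_two_skewInvolutions_general (A : (Matrix m m ℍ[ℝ])ˣ) :
    List.TFAE [
      ∃ g : (Matrix m m ℍ[ℝ])ˣ, g * A * g⁻¹ = A⁻¹,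
      ∃ g : (Matrix m m ℍ[ℝ])ˣ, qdet g.val = 1 ∧ g * A * g⁻¹ = A⁻¹,
      ∃ g₁ g₂ : (Matrix m m ℍ[ℝ])ˣ, qdet g₁.val = 1 ∧ qdet g₂.val = 1 ∧
        g₁.val * g₁.val = -1 ∧ g₂.val * g₂.val = -1 ∧ A = g₁ * g₂] := by
  tfae_have 1 → 3 := by
    rintro ⟨g, hg⟩
    obtain ⟨h, hh, hAh⟩ := exists_matrix_skew_reverser quaternion_i_mul_self A.isUnit g.isUnit
      (congrArg Units.val (conj_eq_inv_iff_mul_mul_eq.1 hg))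
    obtain ⟨g₁, g₂, h₁, h₂, hA⟩ := exists_skewInvolutions_mul_eq hh hAh
    exact ⟨g₁, g₂, qdet_eq_one_of_mul_self_eq_neg_one h₁, qdet_eq_one_of_mul_self_eq_neg_one h₂,
      h₁, h₂, hA⟩
  tfae_have 3 → 2 := by
    rintro ⟨g₁, g₂, hg₁, -, h₁, h₂, rfl⟩
    exact ⟨g₁, hg₁, conj_mul_eq_inv_of_mul_self_eq_neg_one h₁ h₂⟩
  tfae_have 2 → 1 := fun ⟨g, _, hg⟩ => ⟨g, hg⟩
  tfae_finish

end Matrices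

/-- An element of `SL(n, ℍ)` is reversible if and only if it is a product of two
skew-involutions in `SL(n, ℍ)`. -/
theorem reversible_SLH_iff_product_of_two_skewInvolutions (n : ℕ)
    (A : (Matrix (Fin n) (Fin n) (Quaternion ℝ))ˣ) (hA : qdet A.val = 1) :
    (∃ g : (Matrix (Fin n) (Fin n) (Quaternion ℝ))ˣ, qdet g.val = 1 ∧ g * A * g⁻¹ = A⁻¹) ↔
      ∃ g₁ g₂ : (Matrix (Fin n) (Fin n) (Quaternion ℝ))ˣ,
        qdet g₁.val = 1 ∧ qdet g₂.val = 1 ∧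
        g₁.val * g₁.val = -1 ∧ g₂.val * g₂.val = -1 ∧ A = g₁ * g₂ :=
  (reversible_SLH_iff_product_of_two_skewInvolutions_general A).out 1 2
end
end

section
/- For every λ ∈ ℂ \ {0} and n ≥ 1, the matrix Ω(λ,n) ∈ GL(n,ℂ) satisfies Ω(λ,n) · J(λ⁻¹,n) = (J(λ,n))⁻¹ · Ω(λ,n). -/
/-!
Since `λ ≠ 0`, the block `J(λ, n)` is invertible, so it suffices that `J(λ) Ω J(λ⁻¹) = Ω`.
Multiplying by a Jordan block on the right (left) adds the left (lower) neighbour to a multiple of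
each entry, so the `(i, j)` entry of `J(λ) Ω J(λ⁻¹)` is
`x i j + (λ • x i (j - 1) + λ⁻¹ • x (i + 1) j + x (i + 1) (j - 1))`,
and the bracket vanishes by the recursion defining `Ω`.
-/

set_option maxHeartbeats 1000000

noncomputable section

open Matrix

/-- The entries of the matrix `Ω(λ, n)` (with `1`-based indices `i, j ∈ {1, …, n}`):
`x i j = 0` for `i > j` or `j > n`; `x i n = 0` for `i ≠ n`; `x n n = 1`; and
`x i j = -λ⁻¹ • x (i+1) j - λ⁻² • x (i+1) (j+1)` for `1 ≤ i ≤ j ≤ n - 1`. -/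
def omegaAux (lam : ℂ) (n : ℕ) (i j : ℕ) : ℂ :=
  if h1 : j < i ∨ n < j then 0
  else if h2 : j = n then (if i = n then 1 else 0)
  else -lam⁻¹ * omegaAux lam n (i + 1) j - (lam⁻¹) ^ 2 * omegaAux lam n (i + 1) (j + 1)
termination_by n - i
decreasing_by all_goals omega

/-- The upper triangular matrix `Ω(λ, n)`. -/
def Omega (lam : ℂ) (n : ℕ) : Matrix (Fin n) (Fin n) ℂ :=
  Matrix.of fun i j => omegaAux lam n ((i : ℕ) + 1) ((j : ℕ) + 1)

theorem omegaAux_eq_zero_of_lt (lam : ℂ) (n : ℕ) {i j : ℕ} (hji : j < i) :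
    omegaAux lam n i j = 0 := by
  rw [omegaAux, dif_pos (Or.inl hji)]

theorem omegaAux_recursion (lam : ℂ) {n j : ℕ} (i : ℕ) (hj : j < n) :
    omegaAux lam n i j =
      -lam⁻¹ * omegaAux lam n (i + 1) j - lam⁻¹ ^ 2 * omegaAux lam n (i + 1) (j + 1) := by
  rcases lt_or_ge j i with hji | hij
  · rw [omegaAux_eq_zero_of_lt lam n hji, omegaAux_eq_zero_of_lt lam n (Nat.lt_succ_of_lt hji),
      omegaAux_eq_zero_of_lt lam n (Nat.succ_lt_succ hji), mul_zero, mul_zero, sub_zero]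
  · rw [omegaAux, dif_neg (by lia), dif_neg hj.ne]

theorem omegaAux_linear_relation {lam : ℂ} (hlam : lam ≠ 0) {n j : ℕ} (i : ℕ) (hj : j < n) :
    lam * omegaAux lam n i j + lam⁻¹ * omegaAux lam n (i + 1) (j + 1)
      + omegaAux lam n (i + 1) j = 0 := by
  rw [omegaAux_recursion lam i hj]
  field_simp
  ring

theorem jordanC_apply_eq_add (lam : ℂ) (n : ℕ) (i j : Fin n) :
    jordanC lam n i j =
      (if (j : ℕ) = i then lam else 0) + if (j : ℕ) = i + 1 then 1 else 0 := by
  simp only [jordanC, of_apply]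
  split_ifs <;> first | lia | simp

theorem jordanC_mulVec (lam : ℂ) {n : ℕ} (v : ℕ → ℂ) (hv : v n = 0) (i : Fin n) :
    (jordanC lam n *ᵥ fun k => v k) i = lam * v i + v (i + 1) := by
  have last_row : n ≤ (i : ℕ) + 1 → 0 = v (i + 1) := fun h => by
    rw [show (i : ℕ) + 1 = n by lia, hv]
  simp only [mulVec, dotProduct, jordanC_apply_eq_add, add_mul, ite_mul, zero_mul, one_mul,
    Finset.sum_add_distrib]
  rw [Fin.sum_univ_eq_sum_range (fun k => if k = i then lam * v k else 0),
    Fin.sum_univ_eq_sum_range (fun k => if k = i + 1 then v k else 0)]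
  simpa using last_row

theorem vecMul_jordanC (lam : ℂ) {n : ℕ} (w : ℕ → ℂ) (hw : w 0 = 0) (j : Fin n) :
    ((fun k : Fin n => w (k + 1)) ᵥ* jordanC lam n) j = w (j + 1) * lam + w j := by
  simp only [vecMul, dotProduct, jordanC_apply_eq_add, mul_add, mul_ite, mul_zero, mul_one,
    Finset.sum_add_distrib]
  rw [Fin.sum_univ_eq_sum_range (fun k => if (j : ℕ) = k then w (k + 1) * lam else 0),
    Fin.sum_univ_eq_sum_range (fun k => if (j : ℕ) = k + 1 then w (k + 1) else 0)]
  obtain ⟨_ | j, hj⟩ := j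
  · simp [hw, hj]
  · simp [hj, Nat.lt_of_succ_lt hj]

theorem isUpperTriangular_jordanC (lam : ℂ) (n : ℕ) : (jordanC lam n).IsUpperTriangular := by
  intro i j (hji : (j : ℕ) < i)
  rw [jordanC_apply_eq_add, if_neg (by lia), if_neg (by lia), add_zero]

theorem det_jordanC (lam : ℂ) (n : ℕ) : (jordanC lam n).det = lam ^ n := by
  rw [det_of_isUpperTriangular (isUpperTriangular_jordanC lam n)]
  simp [jordanC]

theorem isUnit_det_jordanC {lam : ℂ} (hlam : lam ≠ 0) (n : ℕ) : IsUnit (jordanC lam n).det := by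
  rw [det_jordanC]
  exact (pow_ne_zero n hlam).isUnit

theorem Omega_mul_jordanC_apply (lam mu : ℂ) {n : ℕ} (i j : Fin n) :
    (Omega lam n * jordanC mu n) i j =
      omegaAux lam n (i + 1) (j + 1) * mu + omegaAux lam n (i + 1) j :=
  vecMul_jordanC mu (omegaAux lam n (i + 1)) (omegaAux_eq_zero_of_lt lam n (by lia)) j

theorem jordanC_mul_Omega_mul_jordanC_inv {lam : ℂ} (hlam : lam ≠ 0) (n : ℕ) :
    jordanC lam n * (Omega lam n * jordanC lam⁻¹ n) = Omega lam n := by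
  ext i j
  let x := omegaAux lam n
  let v : ℕ → ℂ := fun k => x (k + 1) (j + 1) * lam⁻¹ + x (k + 1) j
  have hv : v n = 0 := by
    simp only [v, x, omegaAux_eq_zero_of_lt lam n (Nat.succ_lt_succ j.isLt),
      omegaAux_eq_zero_of_lt lam n (Nat.lt_succ_of_lt j.isLt), zero_mul, add_zero]
  calc (jordanC lam n * (Omega lam n * jordanC lam⁻¹ n)) i j
      = (jordanC lam n *ᵥ fun k => v k) i := by
        rw [mul_apply]
        simp only [Omega_mul_jordanC_apply, mulVec, dotProduct, v, x]
    _ = lam * v i + v (i + 1) := jordanC_mulVec lam v hv i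
    _ = x (i + 1) (j + 1)
          + (lam * x (i + 1) j + lam⁻¹ * x (i + 1 + 1) (j + 1) + x (i + 1 + 1) j) := by
        simp only [v]
        field_simp
        ring
    _ = x (i + 1) (j + 1) := by
        rw [omegaAux_linear_relation hlam (i + 1) j.isLt, add_zero]

/-- `Ω(λ, n) · J(λ⁻¹, n) = (J(λ, n))⁻¹ · Ω(λ, n)` for every `λ ∈ ℂ \\ {0}` and `n ≥ 1`. -/
theorem Omega_mul_jordan_inv (lam : ℂ) (hlam : lam ≠ 0) (n : ℕ) (hn : 1 ≤ n) :
    Omega lam n * jordanC lam⁻¹ n = (jordanC lam n)⁻¹ * Omega lam n := by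
  calc Omega lam n * jordanC lam⁻¹ n
      = (jordanC lam n)⁻¹ * (jordanC lam n * (Omega lam n * jordanC lam⁻¹ n)) :=
        (nonsing_inv_mul_cancel_left _ _ (isUnit_det_jordanC hlam n)).symm
    _ = (jordanC lam n)⁻¹ * Omega lam n := by rw [jordanC_mul_Omega_mul_jordanC_inv hlam]
end
end

section
/- For every λ ∈ ℂ \ {0} and n ≥ 1, the matrix Ω(λ,n) ∈ GL(n,ℂ) is invertible with inverse (Ω(λ,n))⁻¹ = Ω(λ⁻¹,n). -/
set_option maxHeartbeats 1000000

noncomputable section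

open Matrix

/-! Read from the bottom right corner, the rows of `Ω(λ, n)` are the coefficient lists of
polynomials `P₀, …, Pₙ₋₁`. With `a = λ⁻¹` and `σ = -a - a² X`, the recursion says that `P₀ = 1` and
that `Pₖ₊₁` is `σ Pₖ` with its constant term removed, whence `Pₖ₊₁ = -a² X σᵏ`. So `Pₖ` is the image
of `Xᵏ` under the linear map `T_a` fixing constants and sending `X f` to `-a² X f(σ)`. If `a b = 1`,
the affine substitutions for `a` and `b` are mutually inverse and `a² b² = 1`,
so `T_b ∘ T_a = id`. -/

section OmegaMap

open Polynomial

variable {R : Type*}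

lemma map_eq_sum_range_coeff_smul [Semiring R] {M : Type*} [AddCommMonoid M] [Module R M]
    (f : R[X] →ₗ[R] M) {p : R[X]} {n : ℕ} (hp : p.natDegree < n) :
    f p = ∑ l ∈ Finset.range n, p.coeff l • f (X ^ l) := by
  conv_lhs => rw [p.as_sum_range' n hp]
  simp only [map_sum, ← smul_X_eq_monomial, map_smul]

variable [CommRing R]

/-- The affine polynomial `-a - a² X`, denoted `σ` above: for `a = λ⁻¹`, multiplication by it
followed by removal of the constant term produces each row of `Ω(λ, n)` from the one below. -/
def omegaAffine (a : R) : R[X] := -C a - C (a ^ 2) * X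

/-- The linear map on polynomials that fixes constants and sends `X * f` to
`-a² X * f(-a - a² X)`. For `a = λ⁻¹`, it carries `Ω(λ, n)`: with row and column indices counted
from the bottom right corner, row `k` lists the coefficients of the image of `X ^ k`. -/
def omegaMap (a : R) : R[X] →ₗ[R] R[X] where
  toFun p := C (p.coeff 0) - C (a ^ 2) * X * p.divX.comp (omegaAffine a)
  map_add' p q := by
    simp only [coeff_add, C_add, divX_add, add_comp]
    ring
  map_smul' r p := by
    simp only [smul_eq_C_mul, coeff_C_mul, C_mul, divX_C_mul, mul_comp, C_comp, RingHom.id_apply]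
    ring

lemma omegaMap_apply (a : R) (p : R[X]) :
    omegaMap a p = C (p.coeff 0) - C (a ^ 2) * X * p.divX.comp (omegaAffine a) :=
  rfl

@[simp]
lemma omegaMap_C (a r : R) : omegaMap a (C r) = C r := by
  simp [omegaMap_apply]

lemma omegaMap_X_mul (a : R) (p : R[X]) :
    omegaMap a (X * p) = -(C (a ^ 2) * X * p.comp (omegaAffine a)) := by
  have hdivX : (X * p).divX = p := by
    ext l
    rw [coeff_divX, coeff_X_mul]
  rw [omegaMap_apply, hdivX, coeff_X_mul_zero, C_0, zero_sub]

lemma omegaAffine_comp_omegaAffine {a b : R} (hab : a * b = 1) :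
    (omegaAffine a).comp (omegaAffine b) = X := by
  have hC : C a * C b = 1 := by rw [← C_mul, hab, C_1]
  simp only [omegaAffine, sub_comp, neg_comp, mul_comp, C_comp, X_comp]
  simp only [C_pow]
  linear_combination (C a + X * (C a * C b + 1)) * hC

lemma omegaMap_omegaMap {a b : R} (hab : a * b = 1) (p : R[X]) :
    omegaMap b (omegaMap a p) = p := by
  have hC : C (b ^ 2) * C (a ^ 2) = 1 := by
    rw [← C_mul, ← mul_pow, mul_comm, hab, one_pow, C_1]
  calc omegaMap b (omegaMap a p)
      = omegaMap b (C (p.coeff 0) + X * (-C (a ^ 2) * p.divX.comp (omegaAffine a))) := by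
        rw [omegaMap_apply a]
        ring_nf
    _ = C (p.coeff 0) + C (b ^ 2) * C (a ^ 2) * X * p.divX := by
        rw [map_add, omegaMap_C, omegaMap_X_mul, mul_comp, neg_comp, C_comp, comp_assoc,
          omegaAffine_comp_omegaAffine hab, comp_X]
        ring
    _ = p := by rw [hC, one_mul, add_comm, X_mul_divX_add]

lemma natDegree_omegaMap_le (a : R) (p : R[X]) : (omegaMap a p).natDegree ≤ p.natDegree := by
  rcases p.natDegree.eq_zero_or_pos with hp | hp
  · rw [eq_C_of_natDegree_eq_zero hp, omegaMap_C]
  · have haffine : (omegaAffine a).natDegree ≤ 1 := by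
      unfold omegaAffine
      compute_degree
    have hcomp : (p.divX.comp (omegaAffine a)).natDegree ≤ p.natDegree - 1 := by
      calc (p.divX.comp (omegaAffine a)).natDegree
          ≤ p.divX.natDegree * (omegaAffine a).natDegree := natDegree_comp_le
        _ ≤ p.divX.natDegree * 1 := Nat.mul_le_mul_left _ haffine
        _ = p.natDegree - 1 := by rw [mul_one, natDegree_divX_eq_natDegree_tsub_one]
    have hX : (C (a ^ 2) * X).natDegree ≤ 1 := by compute_degree
    calc (omegaMap a p).natDegree
        ≤ max 0 (1 + (p.natDegree - 1)) :=
          natDegree_sub_le_of_le (natDegree_C _).le (natDegree_mul_le_of_le hX hcomp)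
      _ = p.natDegree := by omega

lemma coeff_zero_omegaMap (a : R) (p : R[X]) : (omegaMap a p).coeff 0 = p.coeff 0 := by
  simp [omegaMap_apply, mul_assoc]

lemma omegaMap_X_mul_eq_omegaAffine_mul_add (a : R) (p : R[X]) :
    omegaMap a (X * p) = omegaAffine a * omegaMap a p + C (a * p.coeff 0) := by
  have hcomp : p.comp (omegaAffine a)
      = omegaAffine a * p.divX.comp (omegaAffine a) + C (p.coeff 0) := by
    conv_lhs => rw [← X_mul_divX_add p]
    simp only [add_comp, mul_comp, X_comp, C_comp]
  rw [omegaMap_X_mul, hcomp, omegaMap_apply, C_mul]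
  simp only [omegaAffine]
  ring

lemma coeff_succ_omegaMap_X_mul (a : R) (p : R[X]) (l : ℕ) :
    (omegaMap a (X * p)).coeff (l + 1)
      = -a * (omegaMap a p).coeff (l + 1) - a ^ 2 * (omegaMap a p).coeff l := by
  rw [omegaMap_X_mul_eq_omegaAffine_mul_add, omegaAffine]
  simp only [sub_mul, neg_mul, mul_assoc, coeff_add, coeff_sub, coeff_neg, coeff_C_mul,
    coeff_X_mul, coeff_C_succ, add_zero]

lemma sum_coeff_omegaMap_mul_coeff_omegaMap {a b : R} (hab : a * b = 1) {k n : ℕ} (hk : k < n)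
    (m : ℕ) :
    ∑ l : Fin n, (omegaMap a (X ^ k)).coeff l * (omegaMap b (X ^ (l : ℕ))).coeff m
      = if m = k then 1 else 0 := by
  have hdeg : (omegaMap a (X ^ k)).natDegree < n :=
    ((natDegree_omegaMap_le a _).trans (natDegree_X_pow_le k)).trans_lt hk
  have hsum := map_eq_sum_range_coeff_smul (omegaMap b) hdeg
  rw [omegaMap_omegaMap hab, Finset.sum_range] at hsum
  simpa only [finsetSum_coeff, coeff_smul, smul_eq_mul, coeff_X_pow] using
    (congrArg (coeff · m) hsum).symm

lemma omegaAux_eq_coeff_omegaMap (lam : ℂ) {n i j k l : ℕ} (hik : i + k = n) (hjl : j + l = n) :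
    omegaAux lam n i j = (omegaMap lam⁻¹ (X ^ k)).coeff l := by
  rcases lt_or_ge k l with hkl | hlk
  · rw [omegaAux, dif_pos (by omega), coeff_eq_zero_of_natDegree_lt]
    exact ((natDegree_omegaMap_le _ _).trans (natDegree_X_pow_le k)).trans_lt hkl
  rw [omegaAux, dif_neg (by omega)]
  cases l with
  | zero =>
    rw [dif_pos (by omega), coeff_zero_omegaMap, coeff_X_pow]
    exact if_congr (by omega) rfl rfl
  | succ l =>
    obtain ⟨k, rfl⟩ : ∃ k', k = k' + 1 := ⟨k - 1, by omega⟩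
    rw [dif_neg (by omega), pow_succ' X, coeff_succ_omegaMap_X_mul,
      omegaAux_eq_coeff_omegaMap lam (by omega : i + 1 + k = n) hjl,
      omegaAux_eq_coeff_omegaMap lam (by omega : i + 1 + k = n) (by omega : j + 1 + l = n)]
termination_by k

lemma Omega_apply_eq_coeff_omegaMap (lam : ℂ) {n : ℕ} (i j : Fin n) :
    Omega lam n i j = (omegaMap lam⁻¹ (X ^ (i.rev : ℕ))).coeff j.rev :=
  omegaAux_eq_coeff_omegaMap lam (by grind) (by grind)

lemma Omega_mul_Omega_inv {lam : ℂ} (hlam : lam ≠ 0) (n : ℕ) :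
    Omega lam n * Omega lam⁻¹ n = 1 := by
  ext i j
  simp only [mul_apply, Omega_apply_eq_coeff_omegaMap, inv_inv]
  calc ∑ l : Fin n, (omegaMap lam⁻¹ (X ^ (i.rev : ℕ))).coeff l.rev *
        (omegaMap lam (X ^ (l.rev : ℕ))).coeff j.rev
      = ∑ l : Fin n, (omegaMap lam⁻¹ (X ^ (i.rev : ℕ))).coeff l *
        (omegaMap lam (X ^ (l : ℕ))).coeff j.rev :=
        Fintype.sum_equiv Fin.revPerm _ _ fun _ ↦ rfl
    _ = if (j.rev : ℕ) = i.rev then 1 else 0 :=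
        sum_coeff_omegaMap_mul_coeff_omegaMap (inv_mul_cancel₀ hlam) i.rev.isLt _
    _ = (1 : Matrix (Fin n) (Fin n) ℂ) i j := by
        simp only [Fin.val_inj, Fin.rev_inj, one_apply, eq_comm]

end OmegaMap

/-- `Ω(λ, n)` is invertible, with inverse `Ω(λ⁻¹, n)`. -/
theorem Omega_isUnit_and_inv_eq (lam : ℂ) (hlam : lam ≠ 0) (n : ℕ) (hn : 1 ≤ n) :
    IsUnit (Omega lam n) ∧ (Omega lam n)⁻¹ = Omega lam⁻¹ n := by
  have hmul := Omega_mul_Omega_inv hlam n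
  exact ⟨IsUnit.of_mul_eq_one _ hmul, inv_eq_right_inv hmul⟩
end
end

section
/- Let λ ∈ ℂ \ {0} with Im(λ) ≥ 0 and λ ≠ i, and let A = J(λ,n) ⊕ J(−λ⁻¹,n), regarded as an element of SL(2n,ℍ). Then there exists an involution g ∈ SL(2n,ℍ) (g² = I₂ₙ) such that gAg⁻¹ = −A⁻¹. -/
set_option maxHeartbeats 1000000

noncomputable section

open Matrix

/-!
Write `J(l) = l + N`. Since `-J(l)⁻¹ + l⁻¹ = (l J(l))⁻¹ N`, the vectors `(l J(l))ʲ eⱼ` form a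
Jordan chain of `-J(l)⁻¹` with eigenvalue `-l⁻¹`. They are the columns of an upper triangular matrix
`X` with entries `(j choose i) lⁱ⁺ʲ`, and Pascal's rule gives `J(l) X J(-l⁻¹) = -X`. As `X` is
invertible, `G = [[0, X], [X⁻¹, 0]]` is an involution, and `(G A)² = -1` says that
`G A G⁻¹ = -A⁻¹`. The matrix `G` is complex, so its quaternionic determinant is `|det G|² = 1`.
-/

section Jordan

variable {ι : Type*} {n : ℕ} (l : ℂ)

theorem jordanC_mul_apply_castSucc (M : Matrix (Fin (n + 1)) ι ℂ) (i : Fin n) (k : ι) :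
    (jordanC l (n + 1) * M) i.castSucc k = l * M i.castSucc k + M i.succ k := by
  have hrow (j : Fin (n + 1)) : jordanC l (n + 1) i.castSucc j =
      (if j = i.castSucc then l else 0) + if j = i.succ then 1 else 0 := by
    simp only [jordanC, of_apply, Fin.ext_iff, Fin.val_castSucc, Fin.val_succ]
    split_ifs <;> first | omega | simp
  simp [mul_apply, hrow, add_mul, Finset.sum_add_distrib]

theorem jordanC_mul_apply_last (M : Matrix (Fin (n + 1)) ι ℂ) (k : ι) :
    (jordanC l (n + 1) * M) (Fin.last n) k = l * M (Fin.last n) k := by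
  have hrow (j : Fin (n + 1)) : jordanC l (n + 1) (Fin.last n) j =
      if j = Fin.last n then l else 0 := by
    simp [jordanC, Fin.ext_iff, j.isLt.ne]
  simp [mul_apply, hrow]

theorem mul_jordanC_apply_zero (M : Matrix ι (Fin (n + 1)) ℂ) (k : ι) :
    (M * jordanC l (n + 1)) k 0 = M k 0 * l := by
  have hcol (i : Fin (n + 1)) : jordanC l (n + 1) i 0 = if i = 0 then l else 0 := by
    simp only [jordanC, of_apply, Fin.ext_iff, Fin.val_zero, Nat.zero_ne_add_one, if_false,
      eq_comm (a := 0) (b := (i : ℕ))]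
  simp [mul_apply, hcol]

theorem mul_jordanC_apply_succ (M : Matrix ι (Fin (n + 1)) ℂ) (k : ι) (j : Fin n) :
    (M * jordanC l (n + 1)) k j.succ = M k j.succ * l + M k j.castSucc := by
  have hcol (i : Fin (n + 1)) : jordanC l (n + 1) i j.succ =
      (if i = j.succ then l else 0) + if i = j.castSucc then 1 else 0 := by
    simp only [jordanC, of_apply, Fin.ext_iff, Fin.val_castSucc, Fin.val_succ]
    split_ifs <;> first | omega | simp
  simp [mul_apply, hcol, mul_add, Finset.sum_add_distrib]

end Jordan

section Pascal

/-- The upper triangular Pascal matrix with entries `j choose i`, multiplied on both sides by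
`diag(1, r, …, rⁿ⁻¹)`. For `r = l` it intertwines `J(-l⁻¹, n)` and `-J(l, n)⁻¹`. -/
def scaledPascal {R : Type*} [Semiring R] (r : R) (n : ℕ) : Matrix (Fin n) (Fin n) R :=
  of fun i j => (j : ℕ).choose i * r ^ (i + j : ℕ)

theorem scaledPascal_apply {R : Type*} [Semiring R] (r : R) {n : ℕ} (i j : Fin n) :
    scaledPascal r n i j = (j : ℕ).choose i * r ^ (i + j : ℕ) :=
  rfl

theorem isUpperTriangular_scaledPascal {R : Type*} [Semiring R] (r : R) (n : ℕ) :
    (scaledPascal r n).IsUpperTriangular := fun i j (hij : j < i) => by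
  simp [scaledPascal_apply, Nat.choose_eq_zero_of_lt (Fin.val_fin_lt.mpr hij)]

theorem isUnit_scaledPascal {R : Type*} [CommRing R] {r : R} (hr : IsUnit r) (n : ℕ) :
    IsUnit (scaledPascal r n) := by
  rw [isUnit_iff_isUnit_det, det_of_isUpperTriangular (isUpperTriangular_scaledPascal r n)]
  simp [scaledPascal_apply, hr.pow]

theorem jordanC_mul_scaledPascal_apply (l : ℂ) {n : ℕ} (i j : Fin n) :
    (jordanC l n * scaledPascal l n) i j =
      ((j + 1 : ℕ).choose (i + 1) : ℂ) * l ^ (i + j + 1 : ℕ) := by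
  obtain _ | n := n
  · exact i.elim0
  cases i using Fin.lastCases with
  | last =>
    have hchoose : (j : ℕ).choose (n + 1) = 0 := Nat.choose_eq_zero_of_lt j.isLt
    simp only [jordanC_mul_apply_last, scaledPascal_apply, Fin.val_last, Nat.choose_succ_succ',
      hchoose, add_zero]
    ring
  | cast i =>
    simp only [jordanC_mul_apply_castSucc, scaledPascal_apply, Fin.val_castSucc, Fin.val_succ,
      Nat.choose_succ_succ', Nat.cast_add]
    ring

theorem jordanC_mul_scaledPascal_mul_jordanC {l : ℂ} (hl : l ≠ 0) (n : ℕ) :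
    jordanC l n * scaledPascal l n * jordanC (-l⁻¹) n = -scaledPascal l n := by
  ext i j
  obtain _ | n := n
  · exact i.elim0
  cases j using Fin.cases with
  | zero =>
    simp only [mul_jordanC_apply_zero, jordanC_mul_scaledPascal_apply, scaledPascal_apply,
      Matrix.neg_apply, Fin.val_zero, Nat.choose_succ_succ', Nat.choose_zero_succ, Nat.cast_add,
      Nat.cast_zero]
    field_simp
    ring
  | succ j =>
    simp only [mul_jordanC_apply_succ, jordanC_mul_scaledPascal_apply, scaledPascal_apply,
      Matrix.neg_apply, Fin.val_succ, Fin.val_castSucc, Nat.choose_succ_succ', Nat.cast_add]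
    field_simp
    ring

end Pascal

theorem exists_involution_mul_fromBlocks_sq_eq_neg_one {m R : Type*} [Fintype m] [DecidableEq m]
    [Ring R] [IsStablyFiniteRing R] {a b X : Matrix m m R} (hX : IsUnit X) (h : a * X * b = -X) :
    ∃ G : Matrix (m ⊕ m) (m ⊕ m) R,
      G * G = 1 ∧ G * fromBlocks a 0 0 b * (G * fromBlocks a 0 0 b) = -1 := by
  obtain ⟨X, rfl⟩ := hX
  set Y : Matrix m m R := ↑X⁻¹
  have hYX : Y * a * (X * b) = -1 := by
    rw [mul_assoc, ← mul_assoc a, h, mul_neg, Units.inv_mul]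
  have hXY : X * b * (Y * a) = -1 := by
    rw [← neg_eq_iff_eq_neg, ← neg_mul, mul_eq_one_comm, mul_neg, hYX, neg_neg]
  refine ⟨fromBlocks 0 X Y 0, ?_, ?_⟩
  · simp [Y, fromBlocks_multiply]
  · simp [fromBlocks_multiply, hYX, hXY, ← fromBlocks_one, fromBlocks_neg]

theorem conj_eq_neg_inv_of_mul_self {G : Type*} [Group G] [HasDistribNeg G] {g a : G}
    (hg : g * g = 1) (hga : g * a * (g * a) = -1) : g * a * g⁻¹ = -a⁻¹ := by
  rw [inv_eq_of_mul_eq_one_right hg, ← neg_one_mul, eq_mul_inv_iff_mul_eq, mul_assoc, hga]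

theorem qdet_map_C2H {m : Type*} [Fintype m] [DecidableEq m] (M : Matrix m m ℂ) :
    qdet (M.map C2H) = Complex.normSq M.det := by
  have hPhi : Phi (M.map C2H) = fromBlocks M 0 0 ((starRingEnd ℂ).mapMatrix M) := by
    ext (i | i) (j | j) <;> simp [Phi, C2H, qc1, qc2, Complex.ext_iff]
  rw [qdet, hPhi, det_fromBlocks_zero₂₁, ← RingHom.map_det, Complex.mul_conj]

theorem qdet_map_C2H_of_mul_self {m : Type*} [Fintype m] [DecidableEq m] {M : Matrix m m ℂ}
    (hM : M * M = 1) : qdet (M.map C2H) = 1 := by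
  have hdet : M.det * M.det = 1 := by rw [← det_mul, hM, det_one]
  rw [qdet_map_C2H]
  rcases mul_self_eq_one_iff.mp hdet with h | h <;> simp [h]

theorem jordan_pair_conj_to_neg_inv_by_involution_general (n : ℕ) (l : ℂ) (hne : l ≠ 0)
    (A : (Matrix (Fin n ⊕ Fin n) (Fin n ⊕ Fin n) (Quaternion ℝ))ˣ)
    (hA : A.val = (Matrix.fromBlocks (jordanC l n) 0 0 (jordanC (-l⁻¹) n)).map C2H) :
    ∃ g : (Matrix (Fin n ⊕ Fin n) (Fin n ⊕ Fin n) (Quaternion ℝ))ˣ,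
      qdet g.val = 1 ∧ g * g = 1 ∧ g * A * g⁻¹ = -A⁻¹ := by
  obtain ⟨G, hG, hGA⟩ := exists_involution_mul_fromBlocks_sq_eq_neg_one
    (isUnit_scaledPascal hne.isUnit n) (jordanC_mul_scaledPascal_mul_jordanC hne n)
  let φ : Matrix (Fin n ⊕ Fin n) (Fin n ⊕ Fin n) ℂ →+* Matrix _ _ (Quaternion ℝ) :=
    Quaternion.ofComplex.toRingHom.mapMatrix
  have hφG : φ G * φ G = 1 := by rw [← map_mul, hG, map_one]
  let g : (Matrix (Fin n ⊕ Fin n) (Fin n ⊕ Fin n) (Quaternion ℝ))ˣ := ⟨φ G, φ G, hφG, hφG⟩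
  have hg : g * g = 1 := Units.ext hφG
  have hgA : g * A * (g * A) = -1 := by
    have hφA : A.val = φ (fromBlocks (jordanC l n) 0 0 (jordanC (-l⁻¹) n)) := hA
    ext1
    simp only [Units.val_mul, hφA, Units.val_neg, Units.val_one]
    rw [← map_mul, ← map_mul, hGA, map_neg, map_one]
  exact ⟨g, qdet_map_C2H_of_mul_self hG, hg, conj_eq_neg_inv_of_mul_self hg hgA⟩

/-- For `λ ∈ ℂ \\ {0}` with `Im λ ≥ 0` and `λ ≠ i`, there is an involution
`g ∈ SL(2n, ℍ)` with `g A g⁻¹ = -A⁻¹`, where `A = J(λ, n) ⊕ J(-λ⁻¹, n)`. -/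
theorem jordan_pair_conj_to_neg_inv_by_involution (n : ℕ)
    (l : ℂ) (hne : l ≠ 0) (hIm : 0 ≤ l.im) (hi : l ≠ Complex.I)
    (A : (Matrix (Fin n ⊕ Fin n) (Fin n ⊕ Fin n) (Quaternion ℝ))ˣ)
    (hA : A.val = (Matrix.fromBlocks (jordanC l n) 0 0 (jordanC (-l⁻¹) n)).map C2H) :
    ∃ g : (Matrix (Fin n ⊕ Fin n) (Fin n ⊕ Fin n) (Quaternion ℝ))ˣ,
      qdet g.val = 1 ∧ g * g = 1 ∧ g * A * g⁻¹ = -A⁻¹ :=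
  jordan_pair_conj_to_neg_inv_by_involution_general n l hne A hA
end
end
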